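/- arXiv:2203.08572 — 2 statements merged into one kernel-verified Lean document; each statement's English description precedes it below -/
import Mathlib

section
/- Let I = I(G_{n,r}) be the edge ideal of G_{n,r} in R = k[x_1,...,x_n] and let m = (x_1,...,x_n) be the homogeneous maximal ideal. Then m^t · I^{(t)} ⊆ I^t for all t ≥ 1. -/
open MvPolynomial

/-- The graph `G_{n,r}`: vertices `x_1,…,x_n` in cyclic order (indexed by `ZMod n`),
where for `i < j` the vertices `x_i, x_j` are adjacent iff `r+1 ≤ j-i ≤ n-(r+1)`. -/
def Gnr (n r : ℕ) : SimpleGraph (ZMod n) :=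
  SimpleGraph.fromRel (fun i j => r + 1 ≤ j.val - i.val ∧ j.val - i.val ≤ n - (r + 1))

/-- A vertex cover (as a finite set of vertices): meets every edge. -/
def IsVertexCover {V : Type*} (G : SimpleGraph V) (C : Finset V) : Prop :=
  ∀ ⦃a b : V⦄, G.Adj a b → a ∈ C ∨ b ∈ C

/-- A minimal vertex cover. -/
def IsMinVertexCover {V : Type*} (G : SimpleGraph V) (C : Finset V) : Prop :=
  IsVertexCover G C ∧ ∀ D ⊆ C, IsVertexCover G D → D = C

/-- The edge ideal `I(G) = (x_i x_j : {x_i,x_j} ∈ E(G))` of a graph. -/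
noncomputable def edgeIdeal (k : Type*) [Field k] {V : Type*} (G : SimpleGraph V) :
    Ideal (MvPolynomial V k) :=
  Ideal.span {p | ∃ i j : V, G.Adj i j ∧ p = X i * X j}

/-- The monomial prime ideal generated by the variables of a vertex set `C`. -/
noncomputable def coverPrime (k : Type*) [Field k] {V : Type*} (C : Finset V) :
    Ideal (MvPolynomial V k) :=
  Ideal.span ((fun i => (X i : MvPolynomial V k)) '' ↑C)

/-- The `t`-th symbolic power of the edge ideal of `G`: the intersection of the `t`-th
powers of the monomial primes corresponding to the minimal vertex covers of `G`. -/
noncomputable def symbPow (k : Type*) [Field k] {V : Type*} (G : SimpleGraph V) (t : ℕ) :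
    Ideal (MvPolynomial V k) :=
  ⨅ (C : Finset V) (_ : IsMinVertexCover G C), (coverPrime k C) ^ t

/-- support degrees of elements of powers of monomial primes -/
theorem aux_pow {k : Type*} [Field k] {V : Type*} (C : Finset V) (t : ℕ) :
    ∀ p ∈ (coverPrime k C) ^ t, ∀ d ∈ p.support, t ≤ ∑ i ∈ C, d i := by
  classical
  induction t with
  | zero => intros; omega
  | succ t ih =>
    intro p hp
    rw [pow_succ] at hp
    refine Submodule.mul_induction_on hp ?_ ?_
    · intro a ha b hb d hd
      have hb' : ∀ d ∈ b.support, 1 ≤ ∑ i ∈ C, d i := by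
        unfold coverPrime at hb
        intro e he
        obtain ⟨i, hi, hie⟩ := MvPolynomial.mem_ideal_span_X_image.1 hb e he
        have := Finset.single_le_sum (f := fun i => e i) (fun _ _ => Nat.zero_le _)
          (Finset.mem_coe.1 hi)
        omega
      have := MvPolynomial.support_mul a b hd
      obtain ⟨d1, h1, d2, h2, rfl⟩ := Finset.mem_add.1 this
      have e1 := ih a ha d1 h1
      have e2 := hb' d2 h2
      simp only [Finsupp.add_apply, Finset.sum_add_distrib]
      omega
    · intro a b ha hb d hd
      rcases Finset.mem_union.1 (MvPolynomial.support_add hd) with h | h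
      · exact ha d h
      · exact hb d h

def Indep {V : Type*} (G : SimpleGraph V) (A : Finset V) : Prop :=
  ∀ a ∈ A, ∀ b ∈ A, ¬ G.Adj a b

/-- existence of a minimal vertex cover inside a cover -/
theorem aux_min {V : Type*} (G : SimpleGraph V) (C : Finset V) (hC : IsVertexCover G C) :
    ∃ D ⊆ C, IsMinVertexCover G D := by
  obtain ⟨D, hD, hm⟩ := exists_minimal_le_of_wellFoundedLT (IsVertexCover G) C hC
  exact ⟨D, hD, hm.prop, fun E hE h => (Finset.Subset.antisymm hE (hm.le_of_le h hE))⟩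

theorem aux_symb {k : Type*} [Field k] {V : Type*} [Fintype V] (G : SimpleGraph V) (t : ℕ)
    (p : MvPolynomial V k) (hp : p ∈ symbPow k G t) (d : V →₀ ℕ) (hd : d ∈ p.support)
    (A : Finset V) (hA : Indep G A) : t + ∑ i ∈ A, d i ≤ ∑ i, d i := by
  classical
  have hc : IsVertexCover G Aᶜ := by
    intro a b hab
    by_contra h
    simp only [Finset.mem_compl, not_or, not_not] at h
    exact hA a h.1 b h.2 hab
  obtain ⟨D, hD, hm⟩ := aux_min G _ hc
  simp only [symbPow, Ideal.mem_iInf] at hp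
  have h1 := aux_pow D t p (hp D hm) d hd
  have h2 : ∑ i ∈ D, d i ≤ ∑ i ∈ Aᶜ, d i := Finset.sum_le_sum_of_subset hD
  have h3 := Finset.sum_add_sum_compl A (fun i => d i)
  omega

/-- the set-and-collection lemma -/
theorem aux_family {V : Type*} [Fintype V] [DecidableEq V] (G : SimpleGraph V) (a : V → ℕ) (α : ℕ)
    (hmax : ∀ A, Indep G A → ∑ i ∈ A, a i ≤ α) (Λ : Finset (Finset V)) (hne : Λ.Nonempty)
    (hΛ : ∀ A ∈ Λ, Indep G A ∧ ∑ i ∈ A, a i = α) :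
    ∃ U C : Finset V, (∀ x ∈ U, ∃ A ∈ Λ, x ∈ A) ∧ (∀ x ∈ C, ∀ A ∈ Λ, x ∈ A) ∧
      2 * α ≤ ∑ i ∈ U, a i + ∑ i ∈ C, a i := by
  induction hne using Finset.Nonempty.cons_induction with
  | singleton S =>
    refine ⟨S, S, by simp, by simp, ?_⟩
    have := (hΛ S (by simp)).2
    omega
  | cons S Λ hS hne ih =>
    obtain ⟨U, C, hU, hC, h⟩ := ih (fun A hA => hΛ A (by simp [hA]))
    obtain ⟨hSi, hSa⟩ := hΛ S (by simp)
    refine ⟨U ∪ S, C ∩ S, ?_, ?_, ?_⟩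
    · intro x hx
      rcases Finset.mem_union.1 hx with hx | hx
      · obtain ⟨A, hA, hxA⟩ := hU x hx
        exact ⟨A, by simp [hA], hxA⟩
      · exact ⟨S, by simp, hx⟩
    · intro x hx A hA
      rw [Finset.mem_inter] at hx
      rcases Finset.mem_cons.1 hA with rfl | hA
      · exact hx.2
      · exact hC x hx.1 A hA
    · have hind : Indep G ((S ∩ U) ∪ (C \ S)) := by
        have key : ∀ x ∈ U, ∀ y ∈ C, ¬ G.Adj x y := by
          intro x hx y hy
          obtain ⟨A, hA, hxA⟩ := hU x hx
          exact (hΛ A (by simp [hA])).1 x hxA y (hC y hy A hA)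
        have key2 : ∀ x ∈ C, ∀ y ∈ C, ¬ G.Adj x y := by
          intro x hx y hy
          obtain ⟨A, hA⟩ := hne
          exact (hΛ A (by simp [hA])).1 x (hC x hx A hA) y (hC y hy A hA)
        intro x hx y hy
        simp only [Finset.mem_union, Finset.mem_inter, Finset.mem_sdiff] at hx hy
        rcases hx with hx | hx <;> rcases hy with hy | hy
        · exact hSi x hx.1 y hy.1
        · exact key x hx.2 y hy.1
        · exact fun h => key y hy.2 x hx.1 h.symm
        · exact key2 x hx.1 y hy.1
      have h1 := hmax _ hind
      rw [Finset.sum_union (by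
        rw [Finset.disjoint_left]; intro x hx hy
        simp only [Finset.mem_inter, Finset.mem_sdiff] at hx hy
        exact hy.2 hx.1)] at h1
      have h2 := Finset.sum_union_inter (s₁ := U) (s₂ := S) (f := a)
      have h3 := Finset.sum_inter_add_sum_sdiff C S a
      rw [Finset.inter_comm] at h1
      omega

theorem aux_reduce {V : Type*} [Fintype V] (G : SimpleGraph V) (t : ℕ) (N : ℕ) :
    ∀ (a : V →₀ ℕ), ∑ i, a i = 2 * t + N →
    (∀ A, Indep G A → t + ∑ i ∈ A, a i ≤ ∑ i, a i) →
    ∃ b ≤ a, ∑ i, b i = 2 * t ∧ ∀ A, Indep G A → t + ∑ i ∈ A, b i ≤ 2 * t := by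
  classical
  induction N with
  | zero => intro a h1 h2; exact ⟨a, le_rfl, by simpa using h1, by simpa [h1] using h2⟩
  | succ N ih =>
    intro a h1 h2
    obtain ⟨w, hw, hA⟩ : ∃ w, 0 < a w ∧ ∀ A, Indep G A → t + ∑ i ∈ A, a i = ∑ i, a i → w ∈ A := by
      by_cases hne : ((Finset.univ : Finset (Finset V)).filter
          (fun A => Indep G A ∧ t + ∑ i ∈ A, a i = ∑ i, a i)).Nonempty
      · obtain ⟨U, C, hU, hC, h⟩ := aux_family G a (t + (N + 1))
          (fun A hA => by have := h2 A hA; omega) _ hne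
          (fun A hA => by
            simp only [Finset.mem_filter] at hA
            refine ⟨hA.2.1, ?_⟩
            have := hA.2.2
            omega)
        have hUle : ∑ i ∈ U, a i ≤ ∑ i, a i := Finset.sum_le_sum_of_subset (Finset.subset_univ U)
        have : 0 < ∑ i ∈ C, a i := by omega
        obtain ⟨w, hw, hpos⟩ := Finset.exists_ne_zero_of_sum_ne_zero this.ne'
        exact ⟨w, Nat.pos_of_ne_zero hpos, fun A hA he => hC w hw A (by simp [hA, he])⟩
      · have : 0 < ∑ i, a i := by omega
        obtain ⟨w, hw, hpos⟩ := Finset.exists_ne_zero_of_sum_ne_zero this.ne'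
        exact ⟨w, Nat.pos_of_ne_zero hpos, fun A hA he => (hne ⟨A, by simp [hA, he]⟩).elim⟩
    obtain ⟨c, hc⟩ : ∃ c : V →₀ ℕ, a = c + Finsupp.single w 1 := by
      refine ⟨a - Finsupp.single w 1, ?_⟩
      rw [tsub_add_cancel_of_le]
      rw [Finsupp.single_le_iff]; omega
    have hs : ∀ A : Finset V, ∑ i ∈ A, a i = ∑ i ∈ A, c i + if w ∈ A then 1 else 0 := by
      intro A
      simp [hc, Finset.sum_add_distrib, Finsupp.single_apply]
    have hu := hs Finset.univ
    simp only [Finset.mem_univ, if_true] at hu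
    obtain ⟨b, hb, h⟩ := ih c (by omega) (fun A hAi => by
      have e1 := hs A
      have e2 := h2 A hAi
      by_cases hwA : w ∈ A
      · simp only [hwA, if_true] at e1; omega
      · simp only [hwA, if_false] at e1
        have : t + ∑ i ∈ A, a i ≠ ∑ i, a i := fun he => hwA (hA A hAi he)
        omega)
    exact ⟨b, hb.trans (by rw [hc]; exact le_self_add), h⟩

theorem aux_sort_gen {V : Type*} [Fintype V] [LinearOrder V] [Inhabited V] (N : ℕ) (b : V →₀ ℕ)
    (hb : ∑ i, b i = N) :
    ∃ y : ℕ → V, (∀ i j, i ≤ j → j < N → y i ≤ y j) ∧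
      b = ∑ i ∈ Finset.range N, Finsupp.single (y i) 1 := by
  classical
  let s : Multiset V := Finsupp.toMultiset b
  let l := s.sort (· ≤ ·)
  have hl : l.length = N := by
    simp only [l, s, Multiset.length_sort]
    rw [Finsupp.card_toMultiset, Finsupp.sum_fintype _ _ (by simp)]
    exact hb
  have hsorted : l.Pairwise (· ≤ ·) := Multiset.pairwise_sort s (· ≤ ·)
  refine ⟨fun i => l.getD i default, ?_, ?_⟩
  · intro i j hij hj
    have hj' : j < l.length := by omega
    have hi' : i < l.length := by omega
    simp only [List.getD_eq_getElem _ _ hi', List.getD_eq_getElem _ _ hj']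
    rcases hij.eq_or_lt with rfl | h
    · exact le_rfl
    · exact List.pairwise_iff_getElem.1 hsorted i j hi' hj' h
  · have e : (l : Multiset V) = s := Multiset.sort_eq s _
    have e2 : b = Multiset.toFinsupp s := by
      simp only [s]; exact (Finsupp.toMultiset_toFinsupp _).symm
    refine e2.trans ?_
    rw [← e]
    have : l = List.ofFn (fun i : Fin l.length => l.getD i default) := by
      apply List.ext_getElem <;> simp
    rw [← hl, Finset.sum_range]
    conv_lhs => rw [this]
    have : ∀ L : List V, Multiset.toFinsupp (L : Multiset V) =
        (L.map (fun x => Finsupp.single x 1)).sum := by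
      intro L
      induction L with
      | nil => simp
      | cons x L ih =>
        rw [← Multiset.cons_coe, ← Multiset.singleton_add, map_add, ih]
        simp
    rw [this, List.map_ofFn, List.sum_ofFn]
    rfl

theorem aux_sort (m N : ℕ) (b : ZMod (m+1) →₀ ℕ) (hb : ∑ i, b i = N) :
    ∃ y : ℕ → ZMod (m+1), (∀ i j, i ≤ j → j < N → (y i).val ≤ (y j).val) ∧
      b = ∑ i ∈ Finset.range N, Finsupp.single (y i) 1 := by
  let _ : LinearOrder (ZMod (m+1)) := LinearOrder.lift' ZMod.val (ZMod.val_injective (m+1))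
  exact aux_sort_gen N b hb

theorem aux_sum {V : Type*} [DecidableEq V] (y : ℕ → V) (N : ℕ) (A : Finset V) :
    ∑ v ∈ A, (∑ i ∈ Finset.range N, Finsupp.single (y i) 1 : V →₀ ℕ) v =
      ((Finset.range N).filter (fun i => y i ∈ A)).card := by
  simp only [Finsupp.finsetSum_apply]
  rw [Finset.sum_comm, Finset.card_filter]
  refine Finset.sum_congr rfl fun i _ => ?_
  simp [Finsupp.single_apply]

theorem aux_adj (m r t : ℕ) (y : ℕ → ZMod (m+1))
    (hy : ∀ i j, i ≤ j → j < 2 * t → (y i).val ≤ (y j).val)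
    (hA : ∀ A, Indep (Gnr (m+1) r) A →
      t + ((Finset.range (2*t)).filter (fun i => y i ∈ A)).card ≤ 2 * t) (j : ℕ) (hj : j < t) :
    (Gnr (m+1) r).Adj (y j) (y (t + j)) := by
  classical
  have hle := hy j (t + j) (by omega) (by omega)
  have hlt := ZMod.val_lt (y (t + j))
  have h1 : r + 1 ≤ (y (t + j)).val - (y j).val := by
    by_contra hcon
    have := hA (Finset.univ.filter (fun v => (y j).val ≤ v.val ∧ v.val ≤ (y (t + j)).val)) (by
      intro a ha b hb hab
      simp only [Finset.mem_filter, Finset.mem_univ, true_and] at ha hb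
      simp only [Gnr, SimpleGraph.fromRel_adj] at hab
      omega)
    have h2 : Finset.Icc j (t + j) ⊆ (Finset.range (2*t)).filter (fun i => y i ∈
        Finset.univ.filter (fun v => (y j).val ≤ v.val ∧ v.val ≤ (y (t + j)).val)) := by
      intro i hi
      simp only [Finset.mem_Icc] at hi
      simp only [Finset.mem_filter, Finset.mem_univ, true_and, Finset.mem_range]
      exact ⟨by omega, hy _ _ hi.1 (by omega), hy _ _ hi.2 (by omega)⟩
    have h3 := Finset.card_le_card h2
    rw [Nat.card_Icc] at h3
    omega
  have h2 : (y (t + j)).val - (y j).val ≤ m + 1 - (r + 1) := by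
    by_contra hcon
    have := hA (Finset.univ.filter (fun v => v.val ≤ (y j).val ∨ (y (t + j)).val ≤ v.val)) (by
      intro a ha b hb hab
      simp only [Finset.mem_filter, Finset.mem_univ, true_and] at ha hb
      simp only [Gnr, SimpleGraph.fromRel_adj] at hab
      have := ZMod.val_lt a
      have := ZMod.val_lt b
      omega)
    have h2 : Finset.range (j + 1) ∪ Finset.Ico (t + j) (2 * t) ⊆
        (Finset.range (2*t)).filter (fun i => y i ∈
        Finset.univ.filter (fun v => v.val ≤ (y j).val ∨ (y (t + j)).val ≤ v.val)) := by
      intro i hi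
      simp only [Finset.mem_union, Finset.mem_Ico, Finset.mem_range] at hi
      simp only [Finset.mem_filter, Finset.mem_univ, true_and, Finset.mem_range]
      refine ⟨by omega, ?_⟩
      rcases hi with hi | hi
      · exact Or.inl (hy _ _ (by omega) (by omega))
      · exact Or.inr (hy _ _ hi.1 hi.2)
    have h3 := Finset.card_le_card h2
    rw [Finset.card_union_of_disjoint (by
      rw [Finset.disjoint_left]; intro x hx hy
      simp only [Finset.mem_Ico, Finset.mem_range] at hx hy
      omega), Finset.card_range, Nat.card_Ico] at h3
    omega
  rw [Gnr, SimpleGraph.fromRel_adj]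
  refine ⟨?_, Or.inl ⟨h1, h2⟩⟩
  intro he
  rw [he] at h1
  omega

theorem aux_monomial {k : Type*} [Field k] (m r t : ℕ) (a : ZMod (m+1) →₀ ℕ) (c : k)
    (hdeg : 2 * t ≤ ∑ i, a i)
    (h : ∀ A, Indep (Gnr (m+1) r) A → t + ∑ i ∈ A, a i ≤ ∑ i, a i) :
    monomial a c ∈ (edgeIdeal k (Gnr (m+1) r)) ^ t := by
  classical
  obtain ⟨N, hN⟩ := Nat.exists_eq_add_of_le hdeg
  obtain ⟨b, hba, hb, hbA⟩ := aux_reduce _ t N a hN h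
  obtain ⟨y, hy, hby⟩ := aux_sort m (2 * t) b hb
  have hadj := aux_adj m r t y hy (fun A hA => by
    have := hbA A hA
    rw [hby, aux_sum] at this
    exact this)
  obtain ⟨d, rfl⟩ := exists_add_of_le hba
  have hmon : monomial (b + d) c = monomial d c * monomial b (1 : k) := by
    rw [monomial_mul, mul_one, add_comm b d]
  rw [hmon]
  apply Ideal.mul_mem_left
  have : monomial b (1 : k) = ∏ i ∈ Finset.range t, (X (y i) * X (y (t + i))) := by
    rw [hby, monomial_sum_one, two_mul, Finset.prod_range_add, Finset.prod_mul_distrib]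
    rfl
  rw [this]
  have := Ideal.prod_mem_prod (s := Finset.range t) (I := fun _ => edgeIdeal k (Gnr (m+1) r))
    (x := fun i => (X (y i) * X (y (t + i)) : MvPolynomial (ZMod (m+1)) k)) (fun i hi =>
      Ideal.subset_span ⟨y i, y (t + i), hadj i (Finset.mem_range.1 hi), rfl⟩)
  simpa using this

/-- For the edge ideal `I = I(G_{n,r})` and the homogeneous maximal ideal
`m = (x_1,…,x_n)`, one has `m^t · I^{(t)} ⊆ I^t` for all `t ≥ 1`. -/
theorem stmt10 {k : Type*} [Field k] (n r : ℕ) (hn : 2 ≤ n) (hr : r ≤ n / 2 - 1)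
    (t : ℕ) (ht : 1 ≤ t) :
    (Ideal.span (Set.range (X : ZMod n → MvPolynomial (ZMod n) k))) ^ t *
      symbPow k (Gnr n r) t ≤ (edgeIdeal k (Gnr n r)) ^ t := by
  classical
  obtain ⟨m, rfl⟩ : ∃ m, n = m + 1 := ⟨n - 1, by omega⟩
  rw [Ideal.mul_le]
  intro q hq p hp
  have hq' : q ∈ (coverPrime k (Finset.univ : Finset (ZMod (m+1)))) ^ t := by
    simpa [coverPrime, Set.image_univ] using hq
  rw [(q * p).as_sum]
  refine Ideal.sum_mem _ fun d hd => ?_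
  obtain ⟨d1, h1, d2, h2, rfl⟩ := Finset.mem_add.1 (MvPolynomial.support_mul q p hd)
  have e1 := aux_pow _ t q hq' d1 h1
  have e2 := aux_symb _ t p hp d2 h2
  have e3 := e2 ∅ (by intro a ha; simp at ha)
  simp only [Finset.sum_empty] at e3
  apply aux_monomial
  · simp only [Finsupp.add_apply, Finset.sum_add_distrib]
    omega
  · intro A hA
    have e4 := e2 A hA
    have e5 : ∑ i ∈ A, d1 i ≤ ∑ i, d1 i := Finset.sum_le_sum_of_subset (Finset.subset_univ A)
    simp only [Finsupp.add_apply, Finset.sum_add_distrib]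
    omega
end

section
/- The resurgence of the edge ideal I = I(G_{n,r}) equals 2(n - (r+1))/n. -/
open MvPolynomial

section helpers

/-- Independent set. -/
def IndepF {V : Type*} (G : SimpleGraph V) (S : Finset V) : Prop :=
  ∀ a ∈ S, ∀ b ∈ S, ¬ G.Adj a b

lemma set_collection {V : Type*} [Fintype V] [DecidableEq V] (G : SimpleGraph V) (w : V → ℕ)
    (M : ℕ) (hM : ∀ S, IndepF G S → ∑ v ∈ S, w v ≤ M) (F : Finset (Finset V))
    (hF : F.Nonempty) (hF' : ∀ S ∈ F, IndepF G S ∧ ∑ v ∈ S, w v = M) :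
    2 * M ≤ ∑ v with (∀ S ∈ F, v ∈ S), w v + ∑ v with (∃ S ∈ F, v ∈ S), w v := by
  classical
  induction hF using Finset.Nonempty.cons_induction with
  | singleton S =>
    have := (hF' S (by simp)).2
    simp [this]; omega
  | cons S F hS hne ih =>
    have ih := ih (fun T hT => hF' T (by simp [hT]))
    obtain ⟨hSi, hSM⟩ := hF' S (by simp)
    set I : Finset V := Finset.univ.filter (fun v => ∀ S ∈ F, v ∈ S) with hI
    set U : Finset V := Finset.univ.filter (fun v => ∃ S ∈ F, v ∈ S) with hU
    have e1 : (Finset.univ.filter (fun v => ∀ T ∈ Finset.cons S F hS, v ∈ T)) = I ∩ S := by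
      ext v; simp [hI, and_comm]
    have e2 : (Finset.univ.filter (fun v => ∃ T ∈ Finset.cons S F hS, v ∈ T)) = U ∪ S := by
      ext v; simp [hU, or_comm]
    rw [e1, e2]
    have hIU : ∀ x ∈ I, ∀ y ∈ U, ¬ G.Adj x y := by
      intro x hx y hy
      simp only [hI, hU, Finset.mem_filter, Finset.mem_univ, true_and] at hx hy
      obtain ⟨T, hT, hyT⟩ := hy
      exact (hF' T (by simp [hT])).1 x (hx T hT) y hyT
    have hsub : I ⊆ U := by
      intro x hx
      simp only [hI, hU, Finset.mem_filter, Finset.mem_univ, true_and] at hx ⊢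
      obtain ⟨T, hT⟩ := hne
      exact ⟨T, hT, hx T hT⟩
    have hind : IndepF G ((S ∩ U) ∪ I) := by
      intro a ha b hb
      rw [Finset.mem_union, Finset.mem_inter] at ha hb
      rcases ha with ha | ha <;> rcases hb with hb | hb
      · exact hSi a ha.1 b hb.1
      · exact fun h => hIU b hb a ha.2 h.symm
      · exact hIU a ha b hb.2
      · exact hIU a ha b (hsub hb)
    have h1 := hM _ hind
    have h2 := Finset.sum_union_inter (s₁ := S ∩ U) (s₂ := I) (f := w)
    have h3 : S ∩ U ∩ I = I ∩ S := by
      ext v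
      simp only [Finset.mem_inter]
      constructor
      · rintro ⟨⟨a, b⟩, c⟩; exact ⟨c, a⟩
      · rintro ⟨a, b⟩; exact ⟨⟨b, hsub a⟩, a⟩
    rw [h3] at h2
    have h4 := Finset.sum_union_inter (s₁ := U) (s₂ := S) (f := w)
    rw [Finset.inter_comm U S] at h4
    omega

lemma sum_update_sub {V : Type*} [DecidableEq V] (w : V → ℕ) (v : V)
    (hv : 0 < w v) (S : Finset V) :
    ∑ u ∈ S, Function.update w v (w v - 1) u + (if v ∈ S then 1 else 0) = ∑ u ∈ S, w u := by
  split_ifs with h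
  · rw [← Finset.add_sum_erase S _ h, ← Finset.add_sum_erase S w h]
    have : ∑ x ∈ S.erase v, Function.update w v (w v - 1) x = ∑ x ∈ S.erase v, w x := by
      apply Finset.sum_congr rfl
      intro x hx
      rw [Function.update_of_ne (Finset.ne_of_mem_erase hx)]
    rw [this]; simp; omega
  · simp only [add_zero]
    apply Finset.sum_congr rfl
    intro x hx
    rw [Function.update_of_ne]
    rintro rfl; exact h hx

lemma drop_tokens {V : Type*} [Fintype V] [DecidableEq V] (G : SimpleGraph V) (t : ℕ) (e : ℕ) :
    ∀ (w : V → ℕ), ∑ v, w v = 2 * t + e →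
      (∀ S, IndepF G S → ∑ v ∈ S, w v + t ≤ ∑ v, w v) →
      ∃ w' : V → ℕ, w' ≤ w ∧ ∑ v, w' v = 2 * t ∧ ∀ S, IndepF G S → ∑ v ∈ S, w' v ≤ t := by
  classical
  induction e with
  | zero =>
    intro w h1 h2
    refine ⟨w, le_rfl, by simpa using h1, fun S hS => ?_⟩
    have := h2 S hS
    omega
  | succ e ih =>
    intro w h1 h2
    have key : ∃ v, 0 < w v ∧ ∀ S, IndepF G S → ∑ u ∈ S, w u = t + e + 1 → v ∈ S := by
      set T : Finset (Finset V) :=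
        Finset.univ.filter (fun S => IndepF G S ∧ ∑ u ∈ S, w u = t + e + 1) with hT
      by_cases hne : T.Nonempty
      · have := set_collection G w (t + e + 1) (fun S hS => by have := h2 S hS; omega) T hne
          (fun S hS => by simpa [hT] using hS)
        have h3 : ∑ v with (∃ S ∈ T, v ∈ S), w v ≤ ∑ v, w v :=
          Finset.sum_le_sum_of_subset (Finset.filter_subset _ _)
        have h4 : ∑ v with (∀ S ∈ T, v ∈ S), w v ≠ 0 := by omega
        obtain ⟨v, hv, hv'⟩ := Finset.exists_ne_zero_of_sum_ne_zero h4
        refine ⟨v, Nat.pos_of_ne_zero hv', fun S hS hS' => ?_⟩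
        exact (Finset.mem_filter.1 hv).2 S (by simp [hT, hS, hS'])
      · have h4 : ∑ v, w v ≠ 0 := by omega
        obtain ⟨v, hv, hv'⟩ := Finset.exists_ne_zero_of_sum_ne_zero h4
        refine ⟨v, Nat.pos_of_ne_zero hv', fun S hS hS' => ?_⟩
        exact absurd ⟨S, by simp [hT, hS, hS']⟩ hne
    obtain ⟨v, hv, hv'⟩ := key
    have hs := sum_update_sub w v hv
    have hu := hs Finset.univ
    simp only [Finset.mem_univ, if_true] at hu
    obtain ⟨w', a, b, c⟩ := ih (Function.update w v (w v - 1)) (by omega) (by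
      intro S hS
      have h3 := hs S
      have h4 := h2 S hS
      by_cases hvS : v ∈ S
      · simp only [hvS, if_true] at h3; omega
      · have : ∑ u ∈ S, w u ≠ t + e + 1 := fun h => hvS (hv' S hS h)
        simp only [hvS, if_false] at h3; omega)
    refine ⟨w', a.trans ?_, b, c⟩
    intro u
    by_cases huv : u = v
    · subst huv; simp
    · simp [Function.update_of_ne huv]

lemma gnr_adj_iff (n r : ℕ) (a b : ZMod n) :
    (Gnr n r).Adj a b ↔ (r + 1 ≤ b.val - a.val ∧ b.val - a.val ≤ n - (r + 1)) ∨
      (r + 1 ≤ a.val - b.val ∧ a.val - b.val ≤ n - (r + 1)) := by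
  unfold Gnr
  rw [SimpleGraph.fromRel_adj]
  constructor
  · exact fun h => h.2
  · intro h
    refine ⟨?_, h⟩
    rintro rfl
    omega

lemma exists_tokens (n : ℕ) [NeZero n] (w : ZMod n → ℕ) (N : ℕ) (hN : ∑ v, w v = N) :
    ∃ y : Fin N → ZMod n, (Monotone fun j => (y j).val) ∧
      (∀ g : ZMod n → ℕ, ∑ j, g (y j) = ∑ v, w v * g v) ∧
      (∀ (R : Type _) [CommRing R] (g : ZMod n → R), ∏ j, g (y j) = ∏ v, g v ^ w v) := by
  have hc : Fintype.card (Σ v : ZMod n, Fin (w v)) = N := by simp [hN]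
  let e : Fin N ≃ (Σ v : ZMod n, Fin (w v)) := (Fintype.equivFinOfCardEq hc).symm
  let f : Fin N → ℕ := fun j => (e j).1.val
  let e' := (Tuple.sort f).trans e
  refine ⟨fun j => (e' j).1, ?_, ?_, ?_⟩
  · exact Tuple.monotone_sort f
  · intro g
    rw [Fintype.sum_equiv e' _ (fun x : (Σ v : ZMod n, Fin (w v)) => g x.1) (fun _ => rfl),
      Fintype.sum_sigma]
    simp
  · intro R _ g
    rw [Fintype.prod_equiv e' _ (fun x : (Σ v : ZMod n, Fin (w v)) => g x.1) (fun _ => rfl),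
      Fintype.prod_sigma]
    simp

lemma prod_mem_pow {k : Type*} [Field k] (n r : ℕ) [NeZero n] (hr : 2 * (r + 1) ≤ n)
    (t : ℕ) (w : ZMod n → ℕ) (hw : ∑ v, w v = t + t)
    (hS : ∀ S, IndepF (Gnr n r) S → ∑ v ∈ S, w v ≤ t) :
    ∏ v, (X v : MvPolynomial (ZMod n) k) ^ w v ∈ (edgeIdeal k (Gnr n r)) ^ t := by
  classical
  obtain ⟨y, hy, hsum, hprod⟩ := exists_tokens n w _ hw
  rw [← hprod (MvPolynomial (ZMod n) k) X, Fin.prod_univ_add, ← Finset.prod_mul_distrib]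
  have hcard : ∀ S, IndepF (Gnr n r) S →
      (Finset.univ.filter (fun j => y j ∈ S)).card ≤ t := by
    intro S h
    have h1 := hS S h
    have h2 := hsum (fun v => if v ∈ S then 1 else 0)
    simp only [Finset.sum_boole, Nat.cast_id, mul_ite, mul_one, mul_zero] at h2
    rw [h2, ← Finset.sum_filter]
    simpa using h1
  have hmem : ∀ i : Fin t, (X (y (Fin.castAdd t i)) * X (y (Fin.natAdd t i)) :
      MvPolynomial (ZMod n) k) ∈ edgeIdeal k (Gnr n r) := by
    intro i
    apply Ideal.subset_span
    refine ⟨_, _, ?_, rfl⟩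
    set p := Fin.castAdd t i with hp
    set q := Fin.natAdd t i with hq
    have hpv : p.val = i.val := rfl
    have hqv : q.val = t + i.val := rfl
    have hi := i.2
    have hab : (y p).val ≤ (y q).val := hy (by rw [Fin.le_def]; omega)
    have hbn : (y q).val < n := ZMod.val_lt _
    rw [gnr_adj_iff]
    left
    by_contra hcon
    have hcon : (y q).val - (y p).val < r + 1 ∨ n - (r + 1) < (y q).val - (y p).val := by omega
    rcases hcon with hcon | hcon
    · have h1 := hcard (Finset.univ.filter
        (fun v => (y p).val ≤ v.val ∧ v.val ≤ (y q).val)) (by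
          intro a ha b hb
          simp only [Finset.mem_filter, Finset.mem_univ, true_and] at ha hb
          rw [gnr_adj_iff]; omega)
      have h2 : Finset.Icc p q ⊆ Finset.univ.filter (fun j => y j ∈ Finset.univ.filter
        (fun v : ZMod n => (y p).val ≤ v.val ∧ v.val ≤ (y q).val)) := by
        intro j hj
        rw [Finset.mem_Icc] at hj
        simp only [Finset.mem_filter, Finset.mem_univ, true_and]
        exact ⟨hy hj.1, hy hj.2⟩
      have h3 := Finset.card_le_card h2
      rw [Fin.card_Icc] at h3
      omega
    · have h1 := hcard (Finset.univ.filter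
        (fun v => v.val ≤ (y p).val ∨ (y q).val ≤ v.val)) (by
          intro a ha b hb
          have := ZMod.val_lt a
          have := ZMod.val_lt b
          simp only [Finset.mem_filter, Finset.mem_univ, true_and] at ha hb
          rw [gnr_adj_iff]; omega)
      have h2 : (Finset.Ioo p q)ᶜ ⊆ Finset.univ.filter (fun j => y j ∈ Finset.univ.filter
        (fun v : ZMod n => v.val ≤ (y p).val ∨ (y q).val ≤ v.val)) := by
        intro j hj
        rw [Finset.mem_compl, Finset.mem_Ioo, not_and_or, not_lt, not_lt] at hj
        simp only [Finset.mem_filter, Finset.mem_univ, true_and]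
        exact hj.imp (fun h => hy h) (fun h => hy h)
      have h3 := Finset.card_le_card h2
      rw [Finset.card_compl, Fin.card_Ioo, Fintype.card_fin] at h3
      omega
  have := Ideal.prod_mem_prod (s := Finset.univ) (I := fun _ : Fin t => edgeIdeal k (Gnr n r))
    (fun i _ => hmem i)
  simpa using this

lemma pow_support {k : Type*} [Field k] {V : Type*} (f : (V →₀ ℕ) →+ ℕ) (c : ℕ)
    (A : Set (MvPolynomial V k)) (hA : ∀ p ∈ A, ∀ m ∈ p.support, c ≤ f m) (t : ℕ) :
    ∀ p ∈ (Ideal.span A) ^ t, ∀ m ∈ p.support, c * t ≤ f m := by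
  classical
  have hadd : ∀ (c : ℕ) (p q : MvPolynomial V k), (∀ m ∈ p.support, c ≤ f m) →
      (∀ m ∈ q.support, c ≤ f m) → ∀ m ∈ (p + q).support, c ≤ f m := by
    intro c p q hp hq m hm
    rcases Finset.mem_union.1 (MvPolynomial.support_add hm) with h | h
    · exact hp m h
    · exact hq m h
  have hmul : ∀ (c d : ℕ) (p q : MvPolynomial V k), (∀ m ∈ p.support, c ≤ f m) →
      (∀ m ∈ q.support, d ≤ f m) → ∀ m ∈ (p * q).support, c + d ≤ f m := by
    intro c d p q hp hq m hm
    obtain ⟨a, ha, b, hb, rfl⟩ := Finset.mem_add.1 (MvPolynomial.support_mul p q hm)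
    rw [map_add]
    exact add_le_add (hp a ha) (hq b hb)
  have hI : ∀ p ∈ Ideal.span A, ∀ m ∈ p.support, c ≤ f m := by
    intro p hp
    induction hp using Submodule.span_induction with
    | mem x h => exact hA x h
    | zero => simp
    | add x y _ _ hx hy => exact hadd _ _ _ hx hy
    | smul a x _ hx => simpa using hmul 0 c a x (by simp) hx
  induction t with
  | zero => simp
  | succ t ih =>
    intro p hp
    rw [pow_succ] at hp
    induction hp using Submodule.mul_induction_on' with
    | mem_mul_mem x hx y hy =>
      rw [Nat.mul_succ]
      exact hmul _ _ _ _ (ih x hx) (hI y hy)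
    | add x _ y _ hx hy => exact hadd _ _ _ hx hy

/-- The weight of a monomial on a vertex set. -/
noncomputable def wt {V : Type*} (C : Finset V) : (V →₀ ℕ) →+ ℕ :=
  ∑ i ∈ C, Finsupp.applyAddHom i

lemma wt_apply {V : Type*} (C : Finset V) (m : V →₀ ℕ) : wt C m = ∑ i ∈ C, m i := by
  simp [wt]

lemma coverPrime_support {k : Type*} [Field k] {V : Type*} (C : Finset V) (s : ℕ)
    (p : MvPolynomial V k) (hp : p ∈ coverPrime k C ^ s) (m : V →₀ ℕ) (hm : m ∈ p.support) :
    s ≤ ∑ i ∈ C, m i := by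
  classical
  have := pow_support (wt C) 1 _ (by
    rintro _ ⟨i, hi, rfl⟩ m hm
    simp only [support_X, Finset.mem_singleton] at hm
    subst hm
    rw [wt_apply]
    have := Finset.single_le_sum (f := fun j => (Finsupp.single i 1 : V →₀ ℕ) j)
      (fun _ _ => Nat.zero_le _) hi
    simpa using this) s p hp m hm
  rwa [wt_apply, one_mul] at this

lemma edgeIdeal_support {k : Type*} [Field k] {V : Type*} [Fintype V] (G : SimpleGraph V) (t : ℕ)
    (p : MvPolynomial V k) (hp : p ∈ edgeIdeal k G ^ t) (m : V →₀ ℕ) (hm : m ∈ p.support) :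
    2 * t ≤ ∑ i, m i := by
  classical
  have := pow_support (wt Finset.univ) 2 _ (by
    rintro _ ⟨i, j, hij, rfl⟩ m hm
    obtain ⟨a, ha, b, hb, rfl⟩ := Finset.mem_add.1 (MvPolynomial.support_mul _ _ hm)
    simp only [support_X, Finset.mem_singleton] at ha hb
    subst ha hb
    rw [wt_apply]
    simp [Finset.sum_add_distrib, Finsupp.single_apply]) t p hp m hm
  rwa [wt_apply] at this

lemma exists_min_cover {V : Type*} (G : SimpleGraph V) (C : Finset V) :
    IsVertexCover G C → ∃ D ⊆ C, IsMinVertexCover G D := by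
  classical
  induction C using Finset.strongInduction with
  | H C ih =>
    intro hC
    by_cases h : ∀ D ⊆ C, IsVertexCover G D → D = C
    · exact ⟨C, subset_rfl, hC, h⟩
    · push Not at h
      obtain ⟨D, hD, hDc, hne⟩ := h
      obtain ⟨E, hE, hE'⟩ := ih D (Finset.ssubset_iff_subset_ne.2 ⟨hD, hne⟩) hDc
      exact ⟨E, hE.trans hD, hE'⟩

lemma symb_indep {k : Type*} [Field k] {V : Type*} [Fintype V] (G : SimpleGraph V)
    (s : ℕ) (p : MvPolynomial V k) (hp : p ∈ symbPow k G s) (m : V →₀ ℕ) (hm : m ∈ p.support)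
    (S : Finset V) (hS : IndepF G S) : ∑ i ∈ S, m i + s ≤ ∑ i, m i := by
  classical
  obtain ⟨D, hD, hDm⟩ := exists_min_cover G Sᶜ (by
    intro a b hab
    by_contra h
    simp only [Finset.mem_compl, not_or, not_not] at h
    exact hS a h.1 b h.2 hab)
  have hp' : p ∈ coverPrime k D ^ s := by
    simp only [symbPow, Submodule.mem_iInf] at hp
    exact hp D hDm
  have h1 := coverPrime_support D s p hp' m hm
  have h2 : ∑ i ∈ D, m i ≤ ∑ i ∈ Sᶜ, m i := Finset.sum_le_sum_of_subset hD
  have h3 := Finset.sum_add_sum_compl S (fun i => m i)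
  omega

lemma arc_average (n r : ℕ) [NeZero n] (hr : 2 * (r + 1) ≤ n) (s : ℕ) (w : ZMod n → ℕ)
    (hw : ∀ S, IndepF (Gnr n r) S → ∑ v ∈ S, w v + s ≤ ∑ v, w v) :
    n * s + (r + 1) * ∑ v, w v ≤ n * ∑ v, w v := by
  classical
  have h : ∀ i : ZMod n, ∑ j ∈ Finset.range (r + 1), w (i + (j : ZMod n)) + s ≤ ∑ v, w v := by
    intro i
    have hval : ∀ j < r + 1, (i + (j : ZMod n)).val = i.val + j ∨
        (i + (j : ZMod n)).val + n = i.val + j := by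
      intro j hj
      have hj' : ((j : ZMod n)).val = j := ZMod.val_cast_of_lt (by omega)
      have := ZMod.val_lt i
      by_cases hlt : i.val + j < n
      · left; rw [ZMod.val_add_of_lt (by rw [hj']; exact hlt), hj']
      · right
        have := ZMod.val_add_val_of_le (a := i) (b := (j : ZMod n)) (by rw [hj']; omega)
        omega
    have hinj : Set.InjOn (fun j : ℕ => i + (j : ZMod n)) (Finset.range (r + 1)) := by
      intro a ha b hb hab
      simp only [Finset.coe_range, Set.mem_Iio] at ha hb
      have h1 := hval a ha
      have h2 := hval b hb
      simp only at hab
      rw [hab] at h1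
      omega
    rw [← Finset.sum_image (f := w) hinj]
    apply hw
    intro a ha b hb
    simp only [Finset.mem_image, Finset.mem_range] at ha hb
    obtain ⟨x, hx, rfl⟩ := ha
    obtain ⟨z, hz, rfl⟩ := hb
    have h1 := hval x hx
    have h2 := hval z hz
    rw [gnr_adj_iff]
    omega
  have h2 := Finset.sum_le_sum (fun i (_ : i ∈ (Finset.univ : Finset (ZMod n))) => h i)
  rw [Finset.sum_add_distrib, Finset.sum_comm] at h2
  have h3 : ∀ j : ℕ, ∑ i : ZMod n, w (i + (j : ZMod n)) = ∑ v, w v := fun j =>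
    Fintype.sum_equiv (Equiv.addRight (j : ZMod n)) _ _ (fun _ => rfl)
  simp only [h3, Finset.sum_const, Finset.card_range, Finset.card_univ, ZMod.card,
    smul_eq_mul] at h2
  linarith

lemma indep_card (n r : ℕ) [NeZero n] (hr : 2 * (r + 1) ≤ n) (S : Finset (ZMod n))
    (hS : IndepF (Gnr n r) S) : S.card ≤ r + 1 := by
  classical
  rcases S.eq_empty_or_nonempty with rfl | hne
  · simp
  obtain ⟨m, hm, hmin⟩ := Finset.exists_min_image S (fun v => v.val) hne
  have hcl : ∀ v ∈ S, v.val - m.val < r + 1 ∨ n - (r + 1) < v.val - m.val := by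
    intro v hv
    have h1 := hS m hm v hv
    rw [gnr_adj_iff] at h1
    omega
  have := Finset.card_le_card_of_injOn (s := S) (t := Finset.range (r + 1))
    (fun v => if v.val - m.val < r + 1 then v.val - m.val else v.val - m.val - (n - (r + 1)))
    (by
      intro v hv
      have := ZMod.val_lt v
      simp only [Finset.coe_range, Set.mem_Iio]
      split_ifs <;> omega)
    (by
      intro a ha b hb hab
      have := ZMod.val_lt a
      have := ZMod.val_lt b
      have h1 := hcl a ha
      have h2 := hcl b hb
      have h3 := hmin a ha
      have h4 := hmin b hb
      have h5 := hS a ha b hb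
      rw [gnr_adj_iff] at h5
      apply ZMod.val_injective n
      simp only at hab
      split_ifs at hab <;> omega)
  simpa using this

lemma upper {k : Type*} [Field k] (n r : ℕ) [NeZero n] (hr : 2 * (r + 1) ≤ n) (s t : ℕ)
    (h : 2 * (n - (r + 1)) * t < s * n) :
    symbPow k (Gnr n r) s ≤ edgeIdeal k (Gnr n r) ^ t := by
  classical
  intro p hp
  rw [p.as_sum]
  refine Ideal.sum_mem _ fun m hm => ?_
  have hS := fun S hS => symb_indep (Gnr n r) s p hp m hm S hS
  have havg := arc_average n r hr s (fun v => m v) hS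
  obtain ⟨q, rfl⟩ := Nat.exists_eq_add_of_le (show r + 1 ≤ n by omega)
  have hq : r + 1 ≤ q := by omega
  rw [Nat.add_sub_cancel_left] at h
  have hN : 2 * t ≤ ∑ v, m v := by
    by_contra hcon
    push Not at hcon
    have : q * ∑ v, m v ≤ q * (2 * t) := Nat.mul_le_mul_left _ hcon.le
    nlinarith
  have hst : t ≤ s := by
    by_contra hcon
    push Not at hcon
    nlinarith
  obtain ⟨e, he⟩ := Nat.exists_eq_add_of_le hN
  obtain ⟨w', hle, hsum, hind⟩ := drop_tokens (Gnr (r + 1 + q) r) t e (fun v => m v) he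
    (fun S h => by have := hS S h; omega)
  have hmem := prod_mem_pow (k := k) _ r hr t w' (by omega) hind
  have : monomial m (coeff m p) = (C (coeff m p) * ∏ v, X v ^ (m v - w' v)) *
      ∏ v, (X v : MvPolynomial _ k) ^ w' v := by
    rw [mul_assoc, ← Finset.prod_mul_distrib, monomial_eq,
      Finsupp.prod_fintype _ _ (by simp)]
    congr 1
    apply Finset.prod_congr rfl
    intro v _
    rw [← pow_add, Nat.sub_add_cancel (hle v)]
  rw [this]
  exact Ideal.mul_mem_left _ _ hmem

lemma lower {k : Type*} [Field k] (n r : ℕ) [NeZero n] (hr : 2 * (r + 1) ≤ n) (b : ℕ) :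
    ¬ symbPow k (Gnr n r) (2 * b * (n - (r + 1))) ≤ edgeIdeal k (Gnr n r) ^ (n * b + 1) := by
  classical
  intro hle
  let m : ZMod n →₀ ℕ := Finsupp.equivFunOnFinite.symm (fun _ => 2 * b)
  have hmono : (monomial m (1 : k)) = ∏ v, X v ^ (2 * b) := by
    rw [monomial_eq, Finsupp.prod_fintype _ _ (by simp)]
    simp [m]
  have h1 : monomial m (1 : k) ∈ symbPow k (Gnr n r) (2 * b * (n - (r + 1))) := by
    simp only [symbPow, Submodule.mem_iInf]
    intro D hD
    have hc := indep_card n r hr Dᶜ (by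
      intro x hx z hz hxz
      rw [Finset.mem_compl] at hx hz
      exact (hD.1 hxz).elim hx hz)
    rw [Finset.card_compl, ZMod.card] at hc
    have h2 : ∏ v ∈ D, (X v : MvPolynomial (ZMod n) k) ^ (2 * b) ∈
        coverPrime k D ^ (2 * b * D.card) := by
      have := Ideal.prod_mem_prod (s := D) (I := fun _ => coverPrime k D ^ (2 * b))
        (x := fun v => (X v : MvPolynomial (ZMod n) k) ^ (2 * b))
        (fun v hv => Ideal.pow_mem_pow (show X v ∈ coverPrime k D from
          Ideal.subset_span (Set.mem_image_of_mem _ (Finset.mem_coe.2 hv))) _)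
      rwa [Finset.prod_const, ← pow_mul] at this
    rw [hmono, ← Finset.prod_mul_prod_compl D]
    exact Ideal.mul_mem_right _ _
      (Ideal.pow_le_pow_right (Nat.mul_le_mul_left _ (by omega)) h2)
  have h3 := edgeIdeal_support _ _ _ (hle h1) m (by simp [support_monomial])
  simp only [m, Finsupp.equivFunOnFinite_symm_apply_apply, Finset.sum_const, Finset.card_univ,
    ZMod.card, smul_eq_mul] at h3
  nlinarith

end helpers

/-- The resurgence `ρ(I) = sup{s/t : I^{(s)} ⊄ I^t}` of the edge ideal
`I = I(G_{n,r})` equals `2(n-(r+1))/n`. -/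
theorem stmt16 {k : Type*} [Field k] (n r : ℕ) (hn : 2 ≤ n) (hr : r ≤ n / 2 - 1) :
    sSup {x : ℝ | ∃ s t : ℕ, 0 < s ∧ 0 < t ∧
        ¬ (symbPow k (Gnr n r) s ≤ (edgeIdeal k (Gnr n r)) ^ t) ∧ x = (s : ℝ) / t} =
      2 * ((n : ℝ) - (r + 1)) / n := by
  haveI : NeZero n := ⟨by omega⟩
  have hr2 : 2 * (r + 1) ≤ n := by omega
  have hnR : (0 : ℝ) < n := by exact_mod_cast (by omega : 0 < n)
  have hcast : ((n - (r + 1) : ℕ) : ℝ) = (n : ℝ) - (r + 1) := by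
    rw [Nat.cast_sub (by omega)]; push_cast; ring
  have hpos : 0 < n - (r + 1) := by omega
  apply csSup_eq_of_forall_le_of_forall_lt_exists_gt
  · exact ⟨_, 2 * 1 * (n - (r + 1)), n * 1 + 1, by omega, by omega, lower n r hr2 1, rfl⟩
  · rintro x ⟨s, t, hs, ht, hnot, rfl⟩
    have h : ¬ (2 * (n - (r + 1)) * t < s * n) := fun h => hnot (upper n r hr2 s t h)
    push Not at h
    have h' : (s : ℝ) * n ≤ 2 * ((n - (r + 1) : ℕ) : ℝ) * t := by exact_mod_cast h
    rw [hcast] at h'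
    have htR : (0 : ℝ) < t := by exact_mod_cast ht
    rw [div_le_div_iff₀ htR hnR]
    exact h'
  · intro x hx
    rw [lt_div_iff₀ hnR] at hx
    obtain ⟨b, hb⟩ := exists_nat_gt (|x| / (2 * ((n : ℝ) - (r + 1)) - x * n))
    have hδ : 0 < 2 * ((n : ℝ) - (r + 1)) - x * n := by linarith
    rw [div_lt_iff₀ hδ] at hb
    have hb0 : 0 < b := by
      rcases Nat.eq_zero_or_pos b with rfl | h
      · have := abs_nonneg x
        simp at hb
        linarith
      · exact h
    refine ⟨_, ⟨2 * b * (n - (r + 1)), n * b + 1, by positivity, by omega,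
      lower n r hr2 b, rfl⟩, ?_⟩
    rw [lt_div_iff₀ (by positivity)]
    push_cast
    rw [hcast]
    have := le_abs_self x
    nlinarith
end
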